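/- arXiv:1403.2832 — 3 statements merged into one kernel-verified Lean document; each statement's English description precedes it below -/
import Mathlib

section
/- Let V be a vector space, 0 ≤ a ≤ b, and k ≥ 1. If h ∈ C_{k+1}([a,b];V) satisfies δh = 0, then there exists a (non-unique) f ∈ C_k([a,b];V) such that h = δf. -/
/-!
The cochain complex `(C_k, δ)` is contractible: fixing the last argument to be the base point `a`
gives a contracting homotopy. If `f t = -h (t, a)`, then in `(δ h)(t, a) = 0` the face omitting
the last argument contributes `-h t`, and the remaining faces, which all keep `a` in last position,
add up to `(δ f) t`; hence `h = δ f`. Consecutive arguments of `t` stay consecutive in `(t, a)`, so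
`f` vanishes where an increment has to.
-/

open Set MeasureTheory

noncomputable section

/-! ## Increments and the coboundary operator δ -/

/-- The coboundary operator `δ` from `k`-argument increments to `(k+1)`-argument
increments: `(δ g)_{t₁ ⋯ t_{k+1}} = ∑_{i} (-1)^{k-i} g_{t₁ ⋯ t̂ᵢ ⋯ t_{k+1}}`. -/
def deltaOp {V : Type*} [AddCommGroup V] {k : ℕ} (g : (Fin k → ℝ) → V) :
    (Fin (k + 1) → ℝ) → V :=
  fun t => ∑ i : Fin (k + 1), ((-1 : ℤ) ^ (k + 1 + (i : ℕ))) • g (t ∘ i.succAbove)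

/-- Membership in `C_k([a,b];V)`: the function vanishes whenever two consecutive
arguments coincide. -/
def IsIncrement {V : Type*} [AddCommGroup V] {k : ℕ} (a b : ℝ)
    (g : (Fin k → ℝ) → V) : Prop :=
  ∀ t : Fin k → ℝ, (∀ i, t i ∈ Icc a b) →
    (∃ i j : Fin k, (i : ℕ) + 1 = (j : ℕ) ∧ t i = t j) → g t = 0

/-- `δ` on paths: `(δ g)_{st} = g_t - g_s`. -/
def d1 {V : Type*} [AddCommGroup V] (g : ℝ → V) : ℝ → ℝ → V := fun s t => g t - g s

/-- `δ` on 1-increments: `(δ h)_{sut} = h_{st} - h_{su} - h_{ut}`. -/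
def d2 {V : Type*} [AddCommGroup V] (h : ℝ → ℝ → V) : ℝ → ℝ → ℝ → V :=
  fun s u t => h s t - h s u - h u t

/-- `δ` on 2-increments: `(δ f)_{suvt} = f_{uvt} - f_{svt} + f_{sut} - f_{suv}`. -/
def d3 {V : Type*} [AddCommGroup V] (f : ℝ → ℝ → ℝ → V) : ℝ → ℝ → ℝ → ℝ → V :=
  fun s u v t => f u v t - f s v t + f s u t - f s u v

/-! ## Hölder type norms -/

/-- `C` is a `μ`-Hölder bound for the 1-increment `f` on `[a,b]`. -/
def HBnd2 {V : Type*} [NormedAddCommGroup V] (a b μ : ℝ) (f : ℝ → ℝ → V) (C : ℝ) : Prop :=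
  ∀ s ∈ Icc a b, ∀ t ∈ Icc a b, ‖f s t‖ ≤ C * |t - s| ^ μ

/-- Membership in `C_2^μ([a,b];V)`. -/
def MemC2 {V : Type*} [NormedAddCommGroup V] (a b μ : ℝ) (f : ℝ → ℝ → V) : Prop :=
  ∃ C, HBnd2 a b μ f C

/-- The Hölder norm `‖f‖_μ` on `C_2^μ([a,b];V)`. -/
def nrm2 {V : Type*} [NormedAddCommGroup V] (a b μ : ℝ) (f : ℝ → ℝ → V) : ℝ :=
  sInf {C | 0 ≤ C ∧ HBnd2 a b μ f C}

/-- Membership in `C_1^μ([a,b];V)`. -/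
def MemC1 {V : Type*} [NormedAddCommGroup V] (a b μ : ℝ) (g : ℝ → V) : Prop :=
  MemC2 a b μ (d1 g)

/-- The Hölder norm `‖g‖_μ = ‖δ g‖_μ` on `C_1^μ([a,b];V)`. -/
def nrm1 {V : Type*} [NormedAddCommGroup V] (a b μ : ℝ) (g : ℝ → V) : ℝ :=
  nrm2 a b μ (d1 g)

/-- Supremum norm of a path on `[a,b]`. -/
def supNrm {V : Type*} [NormedAddCommGroup V] (a b : ℝ) (g : ℝ → V) : ℝ :=
  sInf {C | 0 ≤ C ∧ ∀ t ∈ Icc a b, ‖g t‖ ≤ C}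

/-- `C` is a `(γ,ρ)`-Hölder bound for the 2-increment `h` on `[a,b]`. -/
def HBnd3 {V : Type*} [NormedAddCommGroup V] (a b γ ρ : ℝ) (h : ℝ → ℝ → ℝ → V)
    (C : ℝ) : Prop :=
  ∀ s ∈ Icc a b, ∀ u ∈ Icc a b, ∀ t ∈ Icc a b,
    ‖h s u t‖ ≤ C * |u - s| ^ γ * |t - u| ^ ρ

/-- The norm `‖h‖_{γ,ρ}` on 2-increments. -/
def nrm3gr {V : Type*} [NormedAddCommGroup V] (a b γ ρ : ℝ) (h : ℝ → ℝ → ℝ → V) : ℝ :=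
  sInf {C | 0 ≤ C ∧ HBnd3 a b γ ρ h C}

/-- A decomposition `h = ∑ i, H i` with `H i ∈ C_3^{ρ i, μ - ρ i}` and `0 < ρ i < μ`. -/
def Decomp3 {V : Type*} [NormedAddCommGroup V] (a b μ : ℝ) (h : ℝ → ℝ → ℝ → V)
    {N : ℕ} (ρ : Fin N → ℝ) (H : Fin N → ℝ → ℝ → ℝ → V) : Prop :=
  (∀ i, 0 < ρ i ∧ ρ i < μ) ∧ (∀ s u t, h s u t = ∑ i, H i s u t) ∧
    (∀ i, ∃ C, HBnd3 a b (ρ i) (μ - ρ i) (H i) C)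

/-- Membership in `C_3^μ([a,b];V)`. -/
def MemC3 {V : Type*} [NormedAddCommGroup V] (a b μ : ℝ) (h : ℝ → ℝ → ℝ → V) : Prop :=
  ∃ (N : ℕ) (ρ : Fin N → ℝ) (H : Fin N → ℝ → ℝ → ℝ → V), Decomp3 a b μ h ρ H

/-- The norm `‖h‖_μ` on `C_3^μ([a,b];V)`, defined through decompositions. -/
def nrm3 {V : Type*} [NormedAddCommGroup V] (a b μ : ℝ) (h : ℝ → ℝ → ℝ → V) : ℝ :=
  sInf {S | ∃ (N : ℕ) (ρ : Fin N → ℝ) (H : Fin N → ℝ → ℝ → ℝ → V),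
    Decomp3 a b μ h ρ H ∧ S = ∑ i, nrm3gr a b (ρ i) (μ - ρ i) (H i)}

/-- Membership in the kernel of `δ : C_3 → C_4` (on `[a,b]`). -/
def KerD3 {V : Type*} [AddCommGroup V] (a b : ℝ) (h : ℝ → ℝ → ℝ → V) : Prop :=
  ∀ s ∈ Icc a b, ∀ u ∈ Icc a b, ∀ v ∈ Icc a b, ∀ t ∈ Icc a b, d3 h s u v t = 0

/-- Membership in `C_3^{1+}([a,b];V)`. -/
def MemC3plus {V : Type*} [NormedAddCommGroup V] (a b : ℝ) (h : ℝ → ℝ → ℝ → V) : Prop :=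
  ∃ μ, 1 < μ ∧ MemC3 a b μ h

/-- Membership in `ZC_3^{1+}([a,b];V) = C_3^{1+} ∩ ker δ`. -/
def MemZC3plus {V : Type*} [NormedAddCommGroup V] (a b : ℝ) (h : ℝ → ℝ → ℝ → V) : Prop :=
  MemC3plus a b h ∧ KerD3 a b h

/-- Membership in `C_2^{1+}([a,b];V)`. -/
def MemC2plus {V : Type*} [NormedAddCommGroup V] (a b : ℝ) (f : ℝ → ℝ → V) : Prop :=
  ∃ μ, 1 < μ ∧ MemC2 a b μ f

/-- `Λ` is a sewing map on `[a,b]`: a linear map `ZC_3^{1+}([a,b];V) → C_2^{1+}([a,b];V)`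
with `δΛ = Id` on `ZC_3^{1+}` and `Λδ = Id` on `C_2^{1+}`. -/
def IsSewing {V : Type*} [NormedAddCommGroup V] [NormedSpace ℝ V] (a b : ℝ)
    (Λ : (ℝ → ℝ → ℝ → V) → ℝ → ℝ → V) : Prop :=
  (∀ h₁ h₂ : ℝ → ℝ → ℝ → V, MemZC3plus a b h₁ → MemZC3plus a b h₂ →
      ∀ s ∈ Icc a b, ∀ t ∈ Icc a b, Λ (h₁ + h₂) s t = Λ h₁ s t + Λ h₂ s t) ∧
  (∀ (c : ℝ) (h : ℝ → ℝ → ℝ → V), MemZC3plus a b h →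
      ∀ s ∈ Icc a b, ∀ t ∈ Icc a b, Λ (c • h) s t = c • Λ h s t) ∧
  (∀ h, MemZC3plus a b h → MemC2plus a b (Λ h)) ∧
  (∀ h, MemZC3plus a b h → ∀ s ∈ Icc a b, ∀ u ∈ Icc a b, ∀ t ∈ Icc a b,
      d2 (Λ h) s u t = h s u t) ∧
  (∀ g : ℝ → ℝ → V, MemC2plus a b g →
      MemZC3plus a b (d2 g) ∧ ∀ s ∈ Icc a b, ∀ t ∈ Icc a b, Λ (d2 g) s t = g s t)

/-! ## Rough paths: Hypothesis (H) -/

/-- Chen's relation: `(δ x²)^{ij}_{sut} = (δ x^i)_{su} (δ x^j)_{ut}` on `[0,T]`. -/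
def Chen {d : ℕ} (T : ℝ) (x : ℝ → Fin d → ℝ) (xx : ℝ → ℝ → Fin d → Fin d → ℝ) : Prop :=
  ∀ s ∈ Icc (0:ℝ) T, ∀ u ∈ Icc (0:ℝ) T, ∀ t ∈ Icc (0:ℝ) T, ∀ i j,
    xx s t i j - xx s u i j - xx u t i j = (x u i - x s i) * (x t j - x u j)

/-- The rough path `(x, x²)` is geometric:
`x²_{st} + (x²_{st})^T = δx_{st} ⊗ δx_{st}`. -/
def Geom {d : ℕ} (T : ℝ) (x : ℝ → Fin d → ℝ) (xx : ℝ → ℝ → Fin d → Fin d → ℝ) : Prop :=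
  ∀ s ∈ Icc (0:ℝ) T, ∀ t ∈ Icc (0:ℝ) T, ∀ i j,
    xx s t i j + xx s t j i = (x t i - x s i) * (x t j - x s j)

/-- Hypothesis (H): `γ > 1/3`, `x ∈ C_1^γ([0,T];ℝ^d)` admits a Lévy area
`x² ∈ C_2^{2γ}` satisfying Chen's relation, and the rough path is geometric. -/
def HypH {d : ℕ} (T γ : ℝ) (x : ℝ → Fin d → ℝ) (xx : ℝ → ℝ → Fin d → Fin d → ℝ) : Prop :=
  1/3 < γ ∧ MemC1 0 T γ x ∧ MemC2 0 T (2*γ) xx ∧ Chen T x xx ∧ Geom T x xx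

/-! ## Weakly controlled paths -/

/-- Remainder `ρ^i_{st} = δz^i_{st} - z^{x;il}_s δx^l_{st}` of a controlled
decomposition for a `V^m`-valued path. -/
def Qrem {V : Type*} [NormedAddCommGroup V] [NormedSpace ℝ V] {d m : ℕ}
    (x : ℝ → Fin d → ℝ) (z : ℝ → Fin m → V) (zx : ℝ → Fin m → Fin d → V) :
    ℝ → ℝ → Fin m → V :=
  fun s t i => z t i - z s i - ∑ l, (x t l - x s l) • zx s i l

/-- `z` (with Gubinelli derivative `zx`) is a weakly controlled path in
`Q_x^κ([a,b];V^m)`. -/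
def WCtrl {V : Type*} [NormedAddCommGroup V] [NormedSpace ℝ V] {d m : ℕ}
    (a b κ : ℝ) (x : ℝ → Fin d → ℝ) (z : ℝ → Fin m → V)
    (zx : ℝ → Fin m → Fin d → V) : Prop :=
  MemC1 a b κ z ∧ MemC1 a b κ zx ∧ MemC2 a b (2*κ) (Qrem x z zx)

/-- The norm `N[z; Q_x^κ] = ‖z‖_κ + ‖z^x‖_∞ + ‖z^x‖_κ + ‖ρ‖_{2κ}`. -/
def QNorm {V : Type*} [NormedAddCommGroup V] [NormedSpace ℝ V] {d m : ℕ}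
    (a b κ : ℝ) (x : ℝ → Fin d → ℝ) (z : ℝ → Fin m → V)
    (zx : ℝ → Fin m → Fin d → V) : ℝ :=
  nrm1 a b κ z + supNrm a b zx + nrm1 a b κ zx + nrm2 a b (2*κ) (Qrem x z zx)

/-- Remainder of the controlled decomposition for a `V`-valued path. -/
def Qrem1 {V : Type*} [NormedAddCommGroup V] [NormedSpace ℝ V] {d : ℕ}
    (x : ℝ → Fin d → ℝ) (z : ℝ → V) (zx : ℝ → Fin d → V) : ℝ → ℝ → V :=
  fun s t => z t - z s - ∑ l, (x t l - x s l) • zx s l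

/-- `z` is a weakly controlled path in `Q_x^κ([a,b];V)`. -/
def WCtrl1 {V : Type*} [NormedAddCommGroup V] [NormedSpace ℝ V] {d : ℕ}
    (a b κ : ℝ) (x : ℝ → Fin d → ℝ) (z : ℝ → V) (zx : ℝ → Fin d → V) : Prop :=
  MemC1 a b κ z ∧ MemC1 a b κ zx ∧ MemC2 a b (2*κ) (Qrem1 x z zx)

/-- The norm `N[z; Q_x^κ([a,b];V)]`. -/
def QNorm1 {V : Type*} [NormedAddCommGroup V] [NormedSpace ℝ V] {d : ℕ}
    (a b κ : ℝ) (x : ℝ → Fin d → ℝ) (z : ℝ → V) (zx : ℝ → Fin d → V) : ℝ :=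
  nrm1 a b κ z + supNrm a b zx + nrm1 a b κ zx + nrm2 a b (2*κ) (Qrem1 x z zx)

/-! ## The rough integral -/

/-- The 2-increment `ρ^l δx^l + (δμ^{x;lk}) x²^{kl}` fed to the sewing map in the
construction of the rough integral (product convention `(gh)_{sut} = g_{su} h_{ut}`). -/
def intRem {V : Type*} [NormedAddCommGroup V] [NormedSpace ℝ V] {d : ℕ}
    (x : ℝ → Fin d → ℝ) (xx : ℝ → ℝ → Fin d → Fin d → ℝ)
    (μ : ℝ → Fin d → V) (μx : ℝ → Fin d → Fin d → V) : ℝ → ℝ → ℝ → V :=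
  fun s u t => (∑ l, (x t l - x u l) • Qrem x μ μx s u l)
    + ∑ l, ∑ k, xx u t k l • (μx u l k - μx s l k)

/-- The increment `μ^l δx^l + μ^{x;lk} x²^{kl} + I(η) + Λ(ρ^l δx^l + (δμ^{x;lk}) x²^{kl})`
defining the rough integral `∫ μ dx + ∫ η du`. -/
def rIncr {V : Type*} [NormedAddCommGroup V] [NormedSpace ℝ V] {d : ℕ}
    (x : ℝ → Fin d → ℝ) (xx : ℝ → ℝ → Fin d → Fin d → ℝ)
    (μ : ℝ → Fin d → V) (μx : ℝ → Fin d → Fin d → V) (η : ℝ → V)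
    (Λ : (ℝ → ℝ → ℝ → V) → ℝ → ℝ → V) : ℝ → ℝ → V :=
  fun s t => (∑ l, (x t l - x s l) • μ s l) + (∑ l, ∑ k, xx s t k l • μx s l k)
    + (∫ u in s..t, η u) + Λ (intRem x xx μ μx) s t

/-! ## Strongly controlled paths -/

/-- The remainder `z^♭` of a strongly controlled decomposition. -/
def Zflat {V : Type*} [NormedAddCommGroup V] [NormedSpace ℝ V] {d : ℕ}
    (x : ℝ → Fin d → ℝ) (xx : ℝ → ℝ → Fin d → Fin d → ℝ)
    (z : ℝ → V) (zx : ℝ → Fin d → V) (zxx : ℝ → Fin d → Fin d → V)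
    (zt : ℝ → V) : ℝ → ℝ → V :=
  fun s t => z t - z s - (∑ l, (x t l - x s l) • zx s l)
    - (∑ l, ∑ k, xx s t k l • zxx s l k) - ∫ u in s..t, zt u

/-- The remainder `z^♯;l_{st} = δ z^{x;l}_{st} - z^{xx;lk}_s δx^k_{st}`. -/
def Zsharp {V : Type*} [NormedAddCommGroup V] [NormedSpace ℝ V] {d : ℕ}
    (x : ℝ → Fin d → ℝ) (zx : ℝ → Fin d → V)
    (zxx : ℝ → Fin d → Fin d → V) : ℝ → ℝ → Fin d → V :=
  fun s t l => zx t l - zx s l - ∑ k, (x t k - x s k) • zxx s l k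

/-- `z` (with data `zx`, `zxx`, `zt`) is a strongly controlled path in
`S_x^κ([a,b];V)`. -/
def SCtrl {V : Type*} [NormedAddCommGroup V] [NormedSpace ℝ V] {d : ℕ}
    (a b κ : ℝ) (x : ℝ → Fin d → ℝ) (xx : ℝ → ℝ → Fin d → Fin d → ℝ)
    (z : ℝ → V) (zx : ℝ → Fin d → V) (zxx : ℝ → Fin d → Fin d → V)
    (zt : ℝ → V) : Prop :=
  MemC1 a b κ z ∧ MemC1 a b κ zx ∧ MemC1 a b κ zxx ∧
  ContinuousOn zt (Icc a b) ∧ (∃ C, ∀ t ∈ Icc a b, ‖zt t‖ ≤ C) ∧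
  MemC2 a b (3*κ) (Zflat x xx z zx zxx zt) ∧
  MemC2 a b (2*κ) (Zsharp x zx zxx)

/-! ## Function-valued controlled paths -/

/-- `f : E → W` is of class `C^k` with all derivatives up to order `k`
bounded by `C` (i.e. it has `C^k_b`-norm at most `C`). -/
def UCk {E W : Type*} [NormedAddCommGroup E] [NormedSpace ℝ E]
    [NormedAddCommGroup W] [NormedSpace ℝ W] (k : ℕ) (f : E → W) (C : ℝ) : Prop :=
  ContDiff ℝ k f ∧ ∀ θ : E, ∀ j : Fin (k + 1), ‖iteratedFDeriv ℝ (j : ℕ) f θ‖ ≤ C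

/-- A strongly controlled path with values in the space of `C^k_b` functions
`E → W`, the Hölder-type conditions being understood in the `C^k_b`-norm. -/
def SCtrlF {E W : Type*} [NormedAddCommGroup E] [NormedSpace ℝ E]
    [NormedAddCommGroup W] [NormedSpace ℝ W] {d : ℕ}
    (a b κ : ℝ) (k : ℕ) (x : ℝ → Fin d → ℝ) (xx : ℝ → ℝ → Fin d → Fin d → ℝ)
    (z : ℝ → E → W) (zx : ℝ → Fin d → E → W)
    (zxx : ℝ → Fin d → Fin d → E → W) (zt : ℝ → E → W) : Prop :=
  (∃ C, ∀ t ∈ Icc a b, UCk k (z t) C) ∧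
  (∃ C, ∀ s ∈ Icc a b, ∀ t ∈ Icc a b,
      UCk k (fun θ => z t θ - z s θ) (C * |t - s| ^ κ)) ∧
  (∃ C, ∀ (l : Fin d), ∀ t ∈ Icc a b, UCk k (zx t l) C) ∧
  (∃ C, ∀ (l : Fin d), ∀ s ∈ Icc a b, ∀ t ∈ Icc a b,
      UCk k (fun θ => zx t l θ - zx s l θ) (C * |t - s| ^ κ)) ∧
  (∃ C, ∀ (l₁ l₂ : Fin d), ∀ t ∈ Icc a b, UCk k (zxx t l₁ l₂) C) ∧
  (∃ C, ∀ (l₁ l₂ : Fin d), ∀ s ∈ Icc a b, ∀ t ∈ Icc a b,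
      UCk k (fun θ => zxx t l₁ l₂ θ - zxx s l₁ l₂ θ) (C * |t - s| ^ κ)) ∧
  (∃ C, ∀ t ∈ Icc a b, UCk k (zt t) C) ∧
  (∀ t₀ ∈ Icc a b, ∀ ε > (0:ℝ), ∃ δ > (0:ℝ), ∀ t ∈ Icc a b, |t - t₀| < δ →
      UCk k (fun θ => zt t θ - zt t₀ θ) ε) ∧
  (∃ C, ∀ s ∈ Icc a b, ∀ t ∈ Icc a b,
      UCk k (fun θ => z t θ - z s θ - (∑ l, (x t l - x s l) • zx s l θ)
        - (∑ l, ∑ kk, xx s t kk l • zxx s l kk θ) - ∫ u in s..t, zt u θ)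
        (C * |t - s| ^ (3 * κ))) ∧
  (∃ C, ∀ (l : Fin d), ∀ s ∈ Icc a b, ∀ t ∈ Icc a b,
      UCk k (fun θ => zx t l θ - zx s l θ - ∑ kk, (x t kk - x s kk) • zxx s l kk θ)
        (C * |t - s| ^ (2 * κ)))

/-- Partial derivative `∂_{θ^j} f (θ)` for `f : ℝ^n → ℝ`. -/
def pderiv' {n : ℕ} (j : Fin n) (f : (Fin n → ℝ) → ℝ) (θ : Fin n → ℝ) : ℝ :=
  fderiv ℝ f θ (Pi.single j 1)

/-- A smooth map, bounded together with all its derivatives. -/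
def SmoothBdd {E W : Type*} [NormedAddCommGroup E] [NormedSpace ℝ E]
    [NormedAddCommGroup W] [NormedSpace ℝ W] (A : E → W) : Prop :=
  ContDiff ℝ (⊤ : ℕ∞) A ∧ ∀ k : ℕ, ∃ C, ∀ θ, ‖iteratedFDeriv ℝ k A θ‖ ≤ C

/-! ## Test functions and viscosity solutions -/

/-- The second order operator `A_{l₁} A_{l₂} g`. -/
def AA {d n : ℕ} (A : Fin d → (Fin n → ℝ) → Fin n → ℝ) (l₁ l₂ : Fin d)
    (g : (Fin n → ℝ) → ℝ) (θ : Fin n → ℝ) : ℝ :=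
  (∑ j₁, ∑ j₂, A l₁ θ j₁ * pderiv' j₁ (fun v => A l₂ v j₂) θ * pderiv' j₂ g θ)
    + ∑ j₁, ∑ j₂, A l₁ θ j₁ * A l₂ θ j₂ * pderiv' j₁ (fun v => pderiv' j₂ g v) θ

/-- The class `T_0` of test functions for the deterministic problem:
strongly controlled paths with `ψ^x = 0` and `ψ^{xx} = 0`. -/
def Test0 {d n : ℕ} (T γ : ℝ) (x : ℝ → Fin d → ℝ) (xx : ℝ → ℝ → Fin d → Fin d → ℝ)
    (ψ ψt : ℝ → (Fin n → ℝ) → ℝ) : Prop :=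
  ∃ κ, 1/3 < κ ∧ κ ≤ γ ∧
    SCtrlF 0 T κ 2 x xx ψ (fun _ _ _ => 0) (fun _ _ _ _ => 0) ψt

/-- The class `T_A` of test functions for the rough transport equation. -/
def TestA {d n : ℕ} (T γ : ℝ) (x : ℝ → Fin d → ℝ) (xx : ℝ → ℝ → Fin d → Fin d → ℝ)
    (A : Fin d → (Fin n → ℝ) → Fin n → ℝ) (ψ ψt : ℝ → (Fin n → ℝ) → ℝ) : Prop :=
  ∃ κ, 1/3 < κ ∧ κ ≤ γ ∧
    SCtrlF 0 T κ 2 x xx ψ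
      (fun s l θ => -(∑ j, A l θ j * pderiv' j (ψ s) θ))
      (fun s l₁ l₂ θ => AA A l₁ l₂ (ψ s) θ) ψt

/-- The class `T_H` of test functions for the rough semilinear equation. -/
def TestH {d n : ℕ} (T γ : ℝ) (x : ℝ → Fin d → ℝ) (xx : ℝ → ℝ → Fin d → Fin d → ℝ)
    (H : Fin d → ℝ → ℝ) (ψ ψt : ℝ → (Fin n → ℝ) → ℝ) : Prop :=
  ∃ κ, 1/3 < κ ∧ κ ≤ γ ∧
    SCtrlF 0 T κ 2 x xx ψ (fun s l θ => H l (ψ s θ))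
      (fun s l₁ l₂ θ => H l₂ (ψ s θ) * deriv (H l₁) (ψ s θ)) ψt

/-- Viscosity subsolution relative to a class `Test` of test functions and a
Hamiltonian `Ham t θ v p`. -/
def ViscSub {n : ℕ} (T : ℝ)
    (Test : (ℝ → (Fin n → ℝ) → ℝ) → (ℝ → (Fin n → ℝ) → ℝ) → Prop)
    (Ham : ℝ → (Fin n → ℝ) → ℝ → (Fin n → ℝ) → ℝ)
    (α : (Fin n → ℝ) → ℝ) (u : ℝ → (Fin n → ℝ) → ℝ) : Prop :=
  (∀ θ, u 0 θ ≤ α θ) ∧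
  ∀ ψ ψt, Test ψ ψt → ∀ t₀ ∈ Icc (0:ℝ) T, ∀ θ₀ : Fin n → ℝ,
    (∃ ε > (0:ℝ), ∀ t ∈ Icc (0:ℝ) T, ∀ θ, |t - t₀| < ε → ‖θ - θ₀‖ < ε →
        u t θ - ψ t θ ≤ u t₀ θ₀ - ψ t₀ θ₀) →
    u t₀ θ₀ = ψ t₀ θ₀ →
    ψt t₀ θ₀ ≤ Ham t₀ θ₀ (ψ t₀ θ₀) (fun j => pderiv' j (ψ t₀) θ₀)

/-- Viscosity supersolution relative to a class `Test` of test functions and a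
Hamiltonian `Ham t θ v p`. -/
def ViscSuper {n : ℕ} (T : ℝ)
    (Test : (ℝ → (Fin n → ℝ) → ℝ) → (ℝ → (Fin n → ℝ) → ℝ) → Prop)
    (Ham : ℝ → (Fin n → ℝ) → ℝ → (Fin n → ℝ) → ℝ)
    (α : (Fin n → ℝ) → ℝ) (u : ℝ → (Fin n → ℝ) → ℝ) : Prop :=
  (∀ θ, α θ ≤ u 0 θ) ∧
  ∀ ψ ψt, Test ψ ψt → ∀ t₀ ∈ Icc (0:ℝ) T, ∀ θ₀ : Fin n → ℝ,
    (∃ ε > (0:ℝ), ∀ t ∈ Icc (0:ℝ) T, ∀ θ, |t - t₀| < ε → ‖θ - θ₀‖ < ε →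
        u t₀ θ₀ - ψ t₀ θ₀ ≤ u t θ - ψ t θ) →
    u t₀ θ₀ = ψ t₀ θ₀ →
    Ham t₀ θ₀ (ψ t₀ θ₀) (fun j => pderiv' j (ψ t₀) θ₀) ≤ ψt t₀ θ₀

/-- Omitting an argument other than the last one from `(t, x)` leaves `x` in last position. -/
lemma snoc_comp_castSucc_succAbove {k : ℕ} (t : Fin (k + 1) → ℝ) (x : ℝ) (j : Fin (k + 1)) :
    (Fin.snoc t x : Fin (k + 2) → ℝ) ∘ j.castSucc.succAbove =
      (Fin.snoc (t ∘ j.succAbove) x : Fin (k + 1) → ℝ) := by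
  ext i
  refine Fin.lastCases ?_ (fun i => ?_) i
  · simp [Fin.succAbove_of_le_castSucc, Fin.le_last]
  · rw [Function.comp_apply, Fin.castSucc_succAbove_castSucc]
    simp

lemma snoc_mem_Icc {k : ℕ} {a b x : ℝ} {t : Fin k → ℝ} (ht : ∀ i, t i ∈ Icc a b)
    (hx : x ∈ Icc a b) (i : Fin (k + 1)) : (Fin.snoc t x : Fin (k + 1) → ℝ) i ∈ Icc a b := by
  refine Fin.lastCases ?_ (fun i => ?_) i
  · simpa using hx
  · simpa using ht i

/-- Splitting off the face that omits the last argument: `(δ h)(t, x) = -(h t) - (δ (h (·, x))) t`. -/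
lemma deltaOp_snoc {V : Type*} [AddCommGroup V] {k : ℕ} (h : (Fin (k + 1) → ℝ) → V)
    (t : Fin (k + 1) → ℝ) (x : ℝ) :
    deltaOp h (Fin.snoc t x) =
      -h t - deltaOp (fun s : Fin k → ℝ => h (Fin.snoc s x)) t := by
  have hlast : (Fin.snoc t x : Fin (k + 2) → ℝ) ∘ (Fin.last (k + 1)).succAbove = t := by
    ext i
    simp
  -- The last face has index `k + 1` (counting from `0`), hence an odd exponent.
  have hodd : (-1 : ℤ) ^ (k + 1 + 1 + (k + 1)) = -1 :=
    Odd.neg_one_pow ⟨k + 1, by ring⟩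
  unfold deltaOp
  rw [Fin.sum_univ_castSucc, hlast, Fin.val_last, hodd, neg_one_smul, add_comm, sub_eq_add_neg,
    ← Finset.sum_neg_distrib]
  congr 1
  refine Finset.sum_congr rfl fun j _ => ?_
  rw [snoc_comp_castSucc_succAbove, Fin.val_castSucc, ← neg_smul]
  congr 1
  ring

/-- If `h ∈ C_{k+1}([a,b];V)` satisfies `δ h = 0`, then there exists a
(non-unique) `f ∈ C_k([a,b];V)` such that `h = δ f`. -/
theorem stmt0 {V : Type*} [AddCommGroup V] (a b : ℝ) (h0a : 0 ≤ a) (hab : a ≤ b)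
    (k : ℕ) (hk : 1 ≤ k) (h : (Fin (k + 1) → ℝ) → V)
    (hC : IsIncrement a b h)
    (hker : ∀ t : Fin (k + 2) → ℝ, (∀ i, t i ∈ Icc a b) → deltaOp h t = 0) :
    ∃ f : (Fin k → ℝ) → V, IsIncrement a b f ∧
      ∀ t : Fin (k + 1) → ℝ, (∀ i, t i ∈ Icc a b) → h t = deltaOp f t := by
  refine ⟨fun s => -h (Fin.snoc s a), ?_, fun t ht => ?_⟩
  · rintro t ht ⟨i, j, hij, htij⟩
    have h0 := hC (Fin.snoc t a) (snoc_mem_Icc ht (left_mem_Icc.2 hab))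
      ⟨i.castSucc, j.castSucc, by simpa using hij, by simpa using htij⟩
    simp [h0]
  · have h0 := hker (Fin.snoc t a) (snoc_mem_Icc ht (left_mem_Icc.2 hab))
    rw [deltaOp_snoc, sub_eq_zero] at h0
    have hneg : deltaOp (fun s : Fin k → ℝ => -h (Fin.snoc s a)) t =
        -deltaOp (fun s : Fin k → ℝ => h (Fin.snoc s a)) t := by
      simp [deltaOp]
    rw [hneg, ← h0, neg_neg]
end
end

section
/- Let x satisfy Hypothesis (H), κ < γ with 2κ + γ > 1, and let V be the space of C² functions ℝ^n → ℝ bounded together with their first and second derivatives (with its natural norm). Let η : [a,b] → V be bounded continuous and μ ∈ Q_x^κ([a,b];V^d) with δμ^l = μ^{x;lk} δx^k + ρ^l, and let z be the rough integral path defined by δz = μ^l δx^l + μ^{x;lk} x²^{kl} + I(η) + Λ(ρ^l δx^l + (δμ^{x;lk}) x²^{kl}). Then for every s ∈ [a,b] and θ ∈ ℝ^n, z_t(ν) − z_s(θ) = η_s(θ)(t − s) + μ^l_s(θ) δx^l_{st} + μ^{x;lk}_s(θ) x²^{kl}_{st} + Dz_s(θ)·(ν − θ) + Dμ^l_s(θ)·(ν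 − θ) δx^l_{st} + R((s,θ),(t,ν)), where R((s,θ),(t,ν))/(|t − s| + |ν − θ|) → 0 as (t,ν) → (s,θ) in [a,b]×ℝ^n. -/
/-!
For fixed `(s, θ)` split `z_t(ν) - z_s(θ) = (z_t(ν) - z_s(ν)) + (z_s(ν) - z_s(θ))`. The second bracket
is `Dz_s(θ)·(ν - θ) + o(‖ν - θ‖)` by differentiability. The first is the defining increment of `z`
evaluated at the point `ν`, so that replacing `ν` by `θ` in its coefficients leaves the following errors:

* `δx^l (μ^l_s(ν) - μ^l_s(θ) - Dμ^l_s(θ)·(ν - θ))`, a bounded factor times `o(‖ν - θ‖)`;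
* `x²^{kl} (μ^{x;lk}_s(ν) - μ^{x;lk}_s(θ))`, which is `o(1) · O(‖ν - θ‖)`;
* `(t - s) (η_s(ν) - η_s(θ))`, which is `O(|t - s|) · o(1)`;
* `∫_s^t (η_u(ν) - η_s(ν)) du`, which is `o(|t - s|)` because `η` is continuous in time uniformly in
  space (`intErr_isLittleO`);
* the sewing term, `O(|t - s|^μ')` with `μ' > 1`, uniformly in space (`isLittleO_of_rpow_bound`).

Each is `o(|t - s| + ‖ν - θ‖)` along the filter `𝓝[[a,b]] s ×ˢ 𝓝 θ`.
-/

open Set MeasureTheory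

noncomputable section

open Filter Topology Asymptotics

/-- The order-zero part of a `C^k_b` bound is a bound on the function itself. -/
theorem UCk.abs_le {E : Type*} [NormedAddCommGroup E] [NormedSpace ℝ E]
    {k : ℕ} {f : E → ℝ} {C : ℝ} (h : UCk k f C) (θ : E) : |f θ| ≤ C := by
  rw [← Real.norm_eq_abs, ← norm_iteratedFDeriv_zero (𝕜 := ℝ) (f := f)]
  exact h.2 θ 0

theorem abs_sub_le_of_mem_uIcc {s t u : ℝ} (hu : u ∈ Set.uIcc s t) : |u - s| ≤ |t - s| := by
  exact Set.abs_sub_left_of_mem_uIcc hu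

/-- A positive power of the distance to the base time tends to zero there. -/
theorem tendsto_abs_sub_rpow {s p : ℝ} (S : Set ℝ) (hp : 0 < p) :
    Tendsto (fun t : ℝ => |t - s| ^ p) (𝓝[S] s) (𝓝 0) := by
  have h : ContinuousAt (fun t : ℝ => |t - s| ^ p) s := by
    apply ContinuousAt.rpow_const (by fun_prop)
    exact Or.inr hp.le
  have h2 := h.tendsto
  simp only [sub_self, abs_zero, Real.zero_rpow hp.ne'] at h2
  exact h2.mono_left nhdsWithin_le_nhds

/-- A function which is `O(|t - s|^p)` with `p > 1`, uniformly in the space variable, is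
`o(t - s)`. -/
theorem isLittleO_of_rpow_bound {E : Type*} {s p C : ℝ} {S : Set ℝ} {L : Filter E}
    {f : ℝ × E → ℝ} (hp : 1 < p) (hf : ∀ t ∈ S, ∀ ν, |f (t, ν)| ≤ C * |t - s| ^ p) :
    f =o[𝓝[S] s ×ˢ L] fun q => q.1 - s := by
  have h1 : f =O[𝓝[S] s ×ˢ L] fun q => |q.1 - s| ^ p := by
    refine IsBigO.of_bound C ?_
    filter_upwards [tendsto_fst.eventually (eventually_mem_nhdsWithin (a := s) (s := S))] with q hq
    rw [Real.norm_eq_abs, Real.norm_of_nonneg (by positivity)]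
    exact hf q.1 hq q.2
  have h2 : (fun q : ℝ × E => |q.1 - s| ^ (p - 1)) =o[𝓝[S] s ×ˢ L] fun _ => (1 : ℝ) :=
    (isLittleO_one_iff ℝ).2 ((tendsto_abs_sub_rpow S (by linarith)).comp tendsto_fst)
  refine h1.trans_isLittleO ?_
  have h3 := h2.mul_isBigO (isBigO_refl (fun q : ℝ × E => |q.1 - s|) (𝓝[S] s ×ˢ L))
  refine (h3.congr_left fun q => ?_).trans_isBigO (IsBigO.of_bound 1 (by simp))
  have h0 := abs_nonneg (q.1 - s)
  calc |q.1 - s| ^ (p - 1) * |q.1 - s| = |q.1 - s| ^ (p - 1 + 1) := by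
        rw [Real.rpow_add_one' h0 (by linarith)]
    _ = |q.1 - s| ^ p := by rw [sub_add_cancel]

/-- If `η` is continuous in time uniformly in space, then
`∫_s^t (η_u(ν) - η_s(ν)) du = o(t - s)` uniformly in `ν`. -/
theorem intErr_isLittleO {E : Type*} {a b s : ℝ} {L : Filter E} {η : ℝ → E → ℝ}
    (hs : s ∈ Icc a b)
    (hη : ∀ ε > (0:ℝ), ∃ δ > (0:ℝ), ∀ t ∈ Icc a b, |t - s| < δ → ∀ ν, |η t ν - η s ν| ≤ ε) :
    (fun q : ℝ × E => ∫ u in s..q.1, (η u q.2 - η s q.2))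
      =o[𝓝[Icc a b] s ×ˢ L] fun q => q.1 - s := by
  refine IsLittleO.of_bound fun ε hε => ?_
  obtain ⟨δ, hδ, h⟩ := hη ε hε
  have hball : ∀ᶠ t in 𝓝[Icc a b] s, t ∈ Icc a b ∧ |t - s| < δ := by
    refine eventually_mem_nhdsWithin.and (eventually_nhdsWithin_of_eventually_nhds ?_)
    exact Metric.ball_mem_nhds s hδ
  filter_upwards [tendsto_fst.eventually hball] with q hq
  refine intervalIntegral.norm_integral_le_of_norm_le_const fun u hu => ?_
  have hu' := uIoc_subset_uIcc hu
  exact h u (uIcc_subset_Icc hs hq.1 hu') ((abs_sub_le_of_mem_uIcc hu').trans_lt hq.2) q.2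

/-- Space-time Taylor expansion of the rough integral path of a
weakly controlled path with values in `C²_b(ℝ^n)`:
`z_t(ν) - z_s(θ) = η_s(θ)(t-s) + μ^l_s(θ) δx^l_{st} + μ^{x;lk}_s(θ) x²^{kl}_{st}
+ Dz_s(θ)·(ν-θ) + Dμ^l_s(θ)·(ν-θ) δx^l_{st} + R`, with
`R = o(|t-s| + |ν-θ|)`. -/
theorem stmt7 {d n : ℕ} (T γ κ a b : ℝ)
    (x : ℝ → Fin d → ℝ) (xx : ℝ → ℝ → Fin d → Fin d → ℝ)
    (hH : HypH T γ x xx) (h0a : 0 ≤ a) (hab : a ≤ b) (hbT : b ≤ T)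
    (hκ0 : 0 < κ) (hκγ : κ < γ) (hκ : 1 < 2 * κ + γ)
    (μ : ℝ → Fin d → (Fin n → ℝ) → ℝ) (μx : ℝ → Fin d → Fin d → (Fin n → ℝ) → ℝ)
    (η : ℝ → (Fin n → ℝ) → ℝ) (z : ℝ → (Fin n → ℝ) → ℝ)
    -- `μ` is a weakly controlled path with values in `C²_b(ℝ^n)`:
    (hμbd : ∃ C, ∀ (l : Fin d), ∀ t ∈ Icc a b, UCk 2 (μ t l) C)
    (hμH : ∃ C, ∀ (l : Fin d), ∀ s ∈ Icc a b, ∀ t ∈ Icc a b,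
      UCk 2 (fun θ => μ t l θ - μ s l θ) (C * |t - s| ^ κ))
    (hμxbd : ∃ C, ∀ (l k : Fin d), ∀ t ∈ Icc a b, UCk 2 (μx t l k) C)
    (hμxH : ∃ C, ∀ (l k : Fin d), ∀ s ∈ Icc a b, ∀ t ∈ Icc a b,
      UCk 2 (fun θ => μx t l k θ - μx s l k θ) (C * |t - s| ^ κ))
    (hρ : ∃ C, ∀ (l : Fin d), ∀ s ∈ Icc a b, ∀ t ∈ Icc a b,
      UCk 2 (fun θ => μ t l θ - μ s l θ - ∑ k, (x t k - x s k) * μx s l k θ)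
        (C * |t - s| ^ (2 * κ)))
    -- `η` is bounded and continuous with values in `C²_b(ℝ^n)`:
    (hηbd : ∃ C, ∀ t ∈ Icc a b, UCk 2 (η t) C)
    (hηc : ∀ t₀ ∈ Icc a b, ∀ ε > (0:ℝ), ∃ δ > (0:ℝ), ∀ t ∈ Icc a b, |t - t₀| < δ →
      UCk 2 (fun θ => η t θ - η t₀ θ) ε)
    -- `z` is the rough integral path `δz = μ δx + μ^x x² + I(η) + Λ(⋯)`, i.e. the
    -- defining increment identity holds modulo a `C_2^{1+}`-remainder in `C²_b`-norm:
    (hzreg : ∀ t ∈ Icc a b, ContDiff ℝ 2 (z t))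
    (hz : ∃ μ' > (1:ℝ), ∃ C, ∀ s ∈ Icc a b, ∀ t ∈ Icc a b,
      UCk 2 (fun θ => z t θ - z s θ - (∑ l, (x t l - x s l) * μ s l θ)
        - (∑ l, ∑ k, xx s t k l * μx s l k θ) - ∫ u in s..t, η u θ)
        (C * |t - s| ^ μ')) :
    ∀ s ∈ Icc a b, ∀ θ : Fin n → ℝ, ∀ ε > (0:ℝ), ∃ δ > (0:ℝ),
      ∀ t ∈ Icc a b, ∀ ν : Fin n → ℝ, |t - s| < δ → ‖ν - θ‖ < δ →
        |z t ν - z s θ - (t - s) * η s θ - (∑ l, (x t l - x s l) * μ s l θ)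
            - (∑ l, ∑ k, xx s t k l * μx s l k θ)
            - fderiv ℝ (z s) θ (ν - θ)
            - ∑ l, (x t l - x s l) * fderiv ℝ (μ s l) θ (ν - θ)|
          ≤ ε * (|t - s| + ‖ν - θ‖) := by
  intro s hs θ
  obtain ⟨-, ⟨Cx, hCx⟩, ⟨Cxx, hCxx⟩, -, -⟩ := hH
  have hγ : 0 < γ := hκ0.trans hκγ
  have hsub : Icc a b ⊆ Icc 0 T := Icc_subset_Icc h0a hbT
  obtain ⟨Cμ, hμbd⟩ := hμbd
  obtain ⟨Cμx, hμxbd⟩ := hμxbd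
  obtain ⟨Cη, hηbd⟩ := hηbd
  obtain ⟨μ', hμ', C, hC⟩ := hz
  set L : Filter (ℝ × (Fin n → ℝ)) := 𝓝[Icc a b] s ×ˢ 𝓝 θ with hL
  have hmem : ∀ᶠ q in L, q.1 ∈ Icc a b := tendsto_fst.eventually eventually_mem_nhdsWithin
  have hfst : (fun q : ℝ × (Fin n → ℝ) => q.1 - s) =O[L] fun q => |q.1 - s| + ‖q.2 - θ‖ :=
    IsBigO.of_bound 1 (Eventually.of_forall fun q => by
      rw [one_mul, Real.norm_eq_abs, Real.norm_of_nonneg (by positivity)]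
      exact le_add_of_nonneg_right (norm_nonneg _))
  have hsnd : (fun q : ℝ × (Fin n → ℝ) => q.2 - θ) =O[L] fun q => |q.1 - s| + ‖q.2 - θ‖ :=
    IsBigO.of_bound 1 (Eventually.of_forall fun q => by
      rw [one_mul, Real.norm_of_nonneg (by positivity)]
      exact le_add_of_nonneg_left (abs_nonneg _))
  have hx : ∀ l, (fun q : ℝ × (Fin n → ℝ) => x q.1 l - x s l) =O[L] fun _ => (1 : ℝ) := by
    intro l
    have h0 := (tendsto_abs_sub_rpow (s := s) (Icc a b) hγ).const_mul Cx
    rw [mul_zero] at h0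
    refine IsBigO.trans (g := fun q : ℝ × (Fin n → ℝ) => Cx * |q.1 - s| ^ γ) (IsBigO.of_bound 1 ?_)
      ((h0.comp tendsto_fst).isBigO_one ℝ)
    filter_upwards [hmem] with q hq
    rw [one_mul]
    exact (norm_le_pi_norm (x q.1 - x s) l).trans
      ((hCx s (hsub hs) q.1 (hsub hq)).trans (le_abs_self _))
  have hxx : ∀ k l, (fun q : ℝ × (Fin n → ℝ) => xx s q.1 k l) =o[L] fun _ => (1 : ℝ) := by
    intro k l
    have h0 := (tendsto_abs_sub_rpow (s := s) (Icc a b) (p := 2 * γ) (by linarith)).const_mul Cxx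
    rw [mul_zero] at h0
    refine IsBigO.trans_isLittleO (g := fun q : ℝ × (Fin n → ℝ) => Cxx * |q.1 - s| ^ (2 * γ)) (IsBigO.of_bound 1 ?_)
      ((isLittleO_one_iff ℝ).2 (h0.comp (tendsto_fst (g := 𝓝 θ))))
    filter_upwards [hmem] with q hq
    rw [one_mul]
    exact (norm_le_pi_norm (xx s q.1 k) l).trans ((norm_le_pi_norm (xx s q.1) k).trans
      ((hCxx s (hsub hs) q.1 (hsub hq)).trans (le_abs_self _)))
  have hTaylor : ∀ f : (Fin n → ℝ) → ℝ, ContDiff ℝ 2 f →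
      (fun q : ℝ × (Fin n → ℝ) => f q.2 - f θ - fderiv ℝ f θ (q.2 - θ))
        =o[L] fun q => |q.1 - s| + ‖q.2 - θ‖ := by
    intro f hf
    have := (hf.differentiable (by norm_num) θ).hasFDerivAt.isLittleO
    exact (this.comp_tendsto tendsto_snd).trans_isBigO hsnd
  -- time continuity at each fixed point, needed for the integrability of `u ↦ η_u(ν)`
  have hηcont : ∀ ν, ContinuousOn (fun u => η u ν) (Icc a b) := by
    intro ν t₀ ht₀
    refine Metric.continuousWithinAt_iff.2 fun ε hε => ?_
    obtain ⟨δ, hδ, h⟩ := hηc t₀ ht₀ (ε / 2) (by linarith)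
    exact ⟨δ, hδ, fun {t} ht htd => ((h t ht htd).abs_le ν).trans_lt (by linarith)⟩
  have hA := hTaylor (z s) (hzreg s hs)
  have hB : (fun q : ℝ × (Fin n → ℝ) => ∑ l, (x q.1 l - x s l) *
      (μ s l q.2 - μ s l θ - fderiv ℝ (μ s l) θ (q.2 - θ)))
        =o[L] fun q => |q.1 - s| + ‖q.2 - θ‖ := by
    refine IsLittleO.fun_sum fun l _ => ?_
    simpa using (hx l).mul_isLittleO (hTaylor (μ s l) (hμbd l s hs).1)
  have hCC : (fun q : ℝ × (Fin n → ℝ) => ∑ l, ∑ k, xx s q.1 k l *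
      (μx s l k q.2 - μx s l k θ)) =o[L] fun q => |q.1 - s| + ‖q.2 - θ‖ := by
    refine IsLittleO.fun_sum fun l _ => IsLittleO.fun_sum fun k _ => ?_
    have h1 := ((hμxbd l k s hs).1.differentiable (by norm_num) θ).isBigO_sub
    have h2 := (h1.comp_tendsto (tendsto_snd (f := 𝓝[Icc a b] s))).trans hsnd
    simpa using (hxx k l).mul_isBigO h2
  have hD : (fun q : ℝ × (Fin n → ℝ) => (q.1 - s) * (η s q.2 - η s θ))
      =o[L] fun q => |q.1 - s| + ‖q.2 - θ‖ := by
    have h1 : Tendsto (fun ν => η s ν - η s θ) (𝓝 θ) (𝓝 0) := by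
      simpa using ((hηbd s hs).1.continuous.tendsto θ).sub_const (η s θ)
    have h2 : (fun q : ℝ × (Fin n → ℝ) => η s q.2 - η s θ) =o[L] fun _ => (1 : ℝ) :=
      (isLittleO_one_iff ℝ).2 (h1.comp tendsto_snd)
    simpa using hfst.mul_isLittleO h2
  have hE : (fun q : ℝ × (Fin n → ℝ) => ∫ u in s..q.1, (η u q.2 - η s q.2))
      =o[L] fun q => |q.1 - s| + ‖q.2 - θ‖ := by
    refine (intErr_isLittleO hs fun ε hε => ?_).trans_isBigO hfst
    obtain ⟨δ, hδ, h⟩ := hηc s hs ε hε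
    exact ⟨δ, hδ, fun t ht htd ν => (h t ht htd).abs_le ν⟩
  -- the increment identity of `z` at the moving point `ν`, which uses its uniformity in space
  have hF : (fun q : ℝ × (Fin n → ℝ) => z q.1 q.2 - z s q.2 - (∑ l, (x q.1 l - x s l) * μ s l q.2)
        - (∑ l, ∑ k, xx s q.1 k l * μx s l k q.2) - ∫ u in s..q.1, η u q.2)
      =o[L] fun q => |q.1 - s| + ‖q.2 - θ‖ :=
    (isLittleO_of_rpow_bound hμ' fun t ht ν => (hC s hs t ht).abs_le ν).trans_isBigO hfst
  have hall := ((((hA.add hB).add hCC).add hD).add hE).add hF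
  intro ε hε
  have hev := (hall.def hε).and hmem
  obtain ⟨p, hp, r, hr, h⟩ := eventually_prod_iff.1 hev
  obtain ⟨δ₁, hδ₁, h₁⟩ := Metric.mem_nhdsWithin_iff.1 hp
  obtain ⟨δ₂, hδ₂, h₂⟩ := Metric.mem_nhds_iff.1 hr
  refine ⟨min δ₁ δ₂, lt_min hδ₁ hδ₂, fun t ht ν htd hνd => ?_⟩
  have hkey := (h (h₁ ⟨htd.trans_le (min_le_left _ _), ht⟩)
    (h₂ (mem_ball_iff_norm.2 (hνd.trans_le (min_le_right _ _))))).1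
  rw [Real.norm_eq_abs, Real.norm_of_nonneg (by positivity)] at hkey
  refine le_of_eq_of_le (congrArg _ ?_) hkey
  have hint : ∫ u in s..t, (η u ν - η s ν) = (∫ u in s..t, η u ν) - (t - s) * η s ν := by
    rw [intervalIntegral.integral_sub
      ((hηcont ν).mono (uIcc_subset_Icc hs ht)).intervalIntegrable intervalIntegrable_const]
    simp
  -- the remainder is the sum of the six error terms: the coefficients at `ν` cancel
  simp only [hint, mul_sub, Finset.sum_sub_distrib]
  ring
end
end

section
/- Let x satisfy Hypothesis (H), let κ > 1/3 with κ ≤ γ, let F ∈ C³(ℝ×ℝ^n;ℝ) and σ ∈ C³(ℝ×ℝ^n;ℝ^d), and let u be a strong solution of du = F(u,Du)dt + σ^l(u,Du)dx^l. Then for every s ∈ [0,T] and θ ∈ ℝ^n, u_t(ν) = u_s(θ) + a_s(θ)(t−s) + b_s^l(θ) δx^l_{st} + c_s^{lk}(θ) x²^{kl}_{st} + p_s^j(θ)(ν^j − θ^j) + q_s^{jl}(θ) δx^l_{st}(ν^j − θ^j) + R, where R/(|t−s| + |ν−θ|) → 0 as (t,ν) → (s,θ), and a_s(θ) = F(u_s(θ),Du_s(θ)),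 b_s^l(θ) = σ^l(u_s(θ),Du_s(θ)), p_s^j(θ) = ∂_{θ^j}u_s(θ), q_s^{jl}(θ) = ∂_{θ^j}[σ^l(u_s(θ),Du_s(θ))], c_s^{lk}(θ) = b_s^k(θ) ∂_uσ^l(u_s(θ),Du_s(θ)) + q_s^{jk}(θ) ∂_{p^j}σ^l(u_s(θ),Du_s(θ)). -/
/-!
A strong solution is in particular a strongly controlled path with values in `C²_b`, so
`u_t(ν) - u_s(θ)` is split at `u_s(ν)`. The time increment `u_t(ν) - u_s(ν)` is given by the
controlled decomposition at the spatial point `ν`, whose remainder is `O(|t - s|^{3κ})` with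
`3κ > 1`; the spatial increment `u_s(ν) - u_s(θ)` is expanded to first order.

Coefficients are then moved from `ν` to `θ`. The coefficient of `δx` is expanded to first order,
which produces the mixed term `q δx (ν - θ)`. The coefficient of `x²` is only frozen: the
error is `O(|t - s|^{2γ} ‖ν - θ‖)`, hence negligible. The drift integral is frozen at `(s, θ)`
by continuity (`isLittleO_drift`). This gives `SCtrlF.expansion`, valid for any strongly
controlled path. The equation enters only through the chain rule `pderiv_comp`, which identifies
the prescribed second-order component `u^{xx}` with the coefficient `c`.
-/

open Set MeasureTheory

noncomputable section

/-- Spatial gradient `Du_t(θ)` of a function-valued path. -/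
def Dgrad {n : ℕ} (u : ℝ → (Fin n → ℝ) → ℝ) (t : ℝ) (θ : Fin n → ℝ) : Fin n → ℝ :=
  fun j => pderiv' j (u t) θ

/-- `∂_u σ(v,p)`. -/
def dσu {n : ℕ} (σ : ℝ → (Fin n → ℝ) → ℝ) (v : ℝ) (p : Fin n → ℝ) : ℝ :=
  deriv (fun w => σ w p) v

/-- `∂_{p^j} σ(v,p)`. -/
def dσp {n : ℕ} (σ : ℝ → (Fin n → ℝ) → ℝ) (j : Fin n) (v : ℝ) (p : Fin n → ℝ) : ℝ :=
  fderiv ℝ (σ v) p (Pi.single j 1)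

/-! ### Elementary estimates -/

lemma UCk.norm_le {E W : Type*} [NormedAddCommGroup E] [NormedSpace ℝ E]
    [NormedAddCommGroup W] [NormedSpace ℝ W] {k : ℕ} {f : E → W} {C : ℝ}
    (h : UCk k f C) (θ : E) : ‖f θ‖ ≤ C := by
  have h0 := h.2 θ 0
  rwa [Fin.val_zero, norm_iteratedFDeriv_zero] at h0

lemma UCk.differentiableAt {E W : Type*} [NormedAddCommGroup E] [NormedSpace ℝ E]
    [NormedAddCommGroup W] [NormedSpace ℝ W] {f : E → W} {C : ℝ}
    (h : UCk 2 f C) (θ : E) : DifferentiableAt ℝ f θ :=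
  (h.1.differentiable (by norm_num)).differentiableAt

/-- The filter of space-time points `(t, ν)` tending to `(s, θ)` with `t ∈ [0, T]`. -/
abbrev stFilter {E : Type*} [NormedAddCommGroup E] (T s : ℝ) (θ : E) : Filter (ℝ × E) :=
  nhdsWithin s (Icc 0 T) ×ˢ nhds θ

/-- The first-order space-time size `|t - s| + ‖ν - θ‖` of the displacement. -/
abbrev stSize {E : Type*} [NormedAddCommGroup E] (s : ℝ) (θ : E) (p : ℝ × E) : ℝ :=
  |p.1 - s| + ‖p.2 - θ‖

section Taylor

variable {E : Type*} [NormedAddCommGroup E] {T s : ℝ} {θ : E}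

lemma stFilter_mem : ∀ᶠ p : ℝ × E in stFilter T s θ, p.1 ∈ Icc (0 : ℝ) T :=
  Filter.tendsto_fst.eventually eventually_mem_nhdsWithin

lemma isBigO_time : (fun p : ℝ × E => |p.1 - s|) =O[stFilter T s θ] stSize s θ := by
  refine Asymptotics.IsBigO.of_bound 1 (.of_forall fun p => ?_)
  have h := norm_nonneg (p.2 - θ)
  have h' := abs_nonneg (p.1 - s)
  rw [Real.norm_eq_abs, Real.norm_eq_abs, abs_abs, abs_of_nonneg (add_nonneg h' h)]
  linarith

lemma isBigO_space : (fun p : ℝ × E => p.2 - θ) =O[stFilter T s θ] stSize s θ := by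
  refine Asymptotics.IsBigO.of_bound 1 (.of_forall fun p => ?_)
  have h := norm_nonneg (p.2 - θ)
  have h' := abs_nonneg (p.1 - s)
  rw [Real.norm_eq_abs, abs_of_nonneg (add_nonneg h' h)]
  linarith

lemma tendsto_time_rpow {μ : ℝ} (hμ : 0 < μ) :
    Filter.Tendsto (fun p : ℝ × E => |p.1 - s| ^ μ) (stFilter T s θ) (nhds 0) := by
  have h1 : Filter.Tendsto (fun t : ℝ => |t - s| ^ μ) (nhdsWithin s (Icc 0 T)) (nhds 0) := by
    have hc : ContinuousAt (fun t : ℝ => |t - s| ^ μ) s := by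
      refine ContinuousAt.rpow_const (by fun_prop) (Or.inr hμ.le)
    have h0 : |s - s| ^ μ = 0 := by simp [Real.zero_rpow hμ.ne']
    have h2 := hc.tendsto
    simp only [h0] at h2
    exact h2.mono_left nhdsWithin_le_nhds
  exact h1.comp Filter.tendsto_fst

/-- A Hölder increment of positive exponent based at `s` tends to `0`. -/
lemma tendsto_of_holder {V : Type*} [NormedAddCommGroup V] {f : ℝ → V} {C μ : ℝ} (hμ : 0 < μ)
    (hf : ∀ t ∈ Icc (0 : ℝ) T, ‖f t‖ ≤ C * |t - s| ^ μ) :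
    Filter.Tendsto (fun p : ℝ × E => f p.1) (stFilter T s θ) (nhds 0) := by
  refine squeeze_zero_norm' (stFilter_mem.mono fun p hp => hf p.1 hp) ?_
  simpa using (tendsto_time_rpow (T := T) (s := s) (θ := θ) hμ).const_mul C

/-- Exponent larger than one makes a term negligible with respect to `|t - s|`. -/
lemma isLittleO_of_holder {f : ℝ × E → ℝ} {C μ : ℝ} (hμ : 1 < μ)
    (hf : ∀ p : ℝ × E, p.1 ∈ Icc (0 : ℝ) T → ‖f p‖ ≤ C * |p.1 - s| ^ μ) :
    f =o[stFilter T s θ] stSize s θ := by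
  have hO : f =O[stFilter T s θ] (fun p => |p.1 - s| ^ (μ - 1) * |p.1 - s|) := by
    refine Asymptotics.IsBigO.of_bound C (stFilter_mem.mono fun p hp => ?_)
    have h0 : (0 : ℝ) ≤ |p.1 - s| := abs_nonneg _
    have hmul : |p.1 - s| ^ (μ - 1) * |p.1 - s| = |p.1 - s| ^ μ := by
      rw [← Real.rpow_add_one' h0 (by linarith)]
      congr 1
      ring
    rw [hmul, Real.norm_of_nonneg (Real.rpow_nonneg h0 _)]
    exact hf p hp
  refine hO.trans_isLittleO ?_
  have h1 : (fun p : ℝ × E => |p.1 - s| ^ (μ - 1)) =o[stFilter T s θ] (fun _ => (1 : ℝ)) :=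
    (Asymptotics.isLittleO_one_iff ℝ).2 (tendsto_time_rpow (by linarith))
  simpa using h1.mul_isBigO (isBigO_time (T := T) (s := s) (θ := θ))

/-- If `zt` is continuous in time uniformly over space, and `zt s` is continuous at `θ`, then the
drift integral along `zt` can be frozen at the base point `(s, θ)`. -/
lemma isLittleO_drift {zt : ℝ → E → ℝ} (hs : s ∈ Icc (0 : ℝ) T)
    (hcont : ContinuousAt (zt s) θ)
    (hunif : ∀ t₀ ∈ Icc (0 : ℝ) T, ∀ ε > (0 : ℝ), ∃ δ > (0 : ℝ), ∀ t ∈ Icc (0 : ℝ) T,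
      |t - t₀| < δ → ∀ ν, |zt t ν - zt t₀ ν| ≤ ε) :
    (fun p : ℝ × E => (∫ r in s..p.1, zt r p.2) - (p.1 - s) * zt s θ)
      =o[stFilter T s θ] stSize s θ := by
  refine Asymptotics.IsLittleO.trans_isBigO (g := fun p : ℝ × E => |p.1 - s|) ?_ isBigO_time
  refine Asymptotics.IsLittleO.of_bound fun ε hε => ?_
  obtain ⟨δ, hδ, hδ'⟩ := hunif s hs (ε / 2) (by positivity)
  have hν : ∀ᶠ p : ℝ × E in stFilter T s θ, |zt s p.2 - zt s θ| < ε / 2 := by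
    have := Metric.tendsto_nhds.1 hcont.tendsto (ε / 2) (by positivity)
    exact Filter.tendsto_snd.eventually this
  have ht : ∀ᶠ p : ℝ × E in stFilter T s θ, |p.1 - s| < δ := by
    have : ∀ᶠ t in nhdsWithin s (Icc 0 T), |t - s| < δ :=
      nhdsWithin_le_nhds (Metric.ball_mem_nhds s hδ)
    exact Filter.tendsto_fst.eventually this
  filter_upwards [hν, ht, stFilter_mem] with p hpν hpt hpT
  have hsub : uIcc s p.1 ⊆ Icc 0 T := uIcc_subset_Icc hs hpT
  have hc : ContinuousOn (fun r => zt r p.2) (uIcc s p.1) := by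
    intro r hr
    rw [ContinuousWithinAt, Metric.tendsto_nhdsWithin_nhds]
    intro η hη
    obtain ⟨δ', hδ0, h⟩ := hunif r (hsub hr) (η / 2) (by positivity)
    refine ⟨δ', hδ0, fun t ht htr => ?_⟩
    rw [Real.dist_eq]
    exact lt_of_le_of_lt (h t (hsub ht) htr p.2) (by linarith)
  have hint : (∫ r in s..p.1, zt r p.2) - (p.1 - s) * zt s θ
      = ∫ r in s..p.1, (zt r p.2 - zt s θ) := by
    rw [intervalIntegral.integral_sub hc.intervalIntegrable intervalIntegrable_const]
    simp
  rw [hint, Real.norm_eq_abs |p.1 - s|, abs_abs]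
  refine intervalIntegral.norm_integral_le_of_norm_le_const fun r hr => ?_
  have hr' : r ∈ uIcc s p.1 := uIoc_subset_uIcc hr
  have hrs : |r - s| < δ := lt_of_le_of_lt (abs_sub_left_of_mem_uIcc hr') hpt
  have h1 := hδ' r (hsub hr') hrs p.2
  calc ‖zt r p.2 - zt s θ‖ ≤ |zt r p.2 - zt s p.2| + |zt s p.2 - zt s θ| := abs_sub_le _ _ _
    _ ≤ ε := by linarith

variable [NormedSpace ℝ E]

lemma isLittleO_spatial {g : E → ℝ} (hg : DifferentiableAt ℝ g θ) :
    (fun p : ℝ × E => g p.2 - g θ - fderiv ℝ g θ (p.2 - θ)) =o[stFilter T s θ] stSize s θ :=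
  ((hg.hasFDerivAt.isLittleO).comp_tendsto Filter.tendsto_snd).trans_isBigO isBigO_space

lemma isLittleO_increment_mul_spatial {w : ℝ → ℝ} {g : E → ℝ}
    (hw : Filter.Tendsto (fun p : ℝ × E => w p.1) (stFilter T s θ) (nhds 0))
    (hg : DifferentiableAt ℝ g θ) :
    (fun p : ℝ × E => w p.1 * (g p.2 - g θ - fderiv ℝ g θ (p.2 - θ)))
      =o[stFilter T s θ] stSize s θ := by
  simpa using ((Asymptotics.isLittleO_one_iff ℝ).2 hw).mul (isLittleO_spatial (T := T) (s := s) hg)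

lemma isLittleO_increment_mul_diff {w : ℝ → ℝ} {g : E → ℝ}
    (hw : Filter.Tendsto (fun p : ℝ × E => w p.1) (stFilter T s θ) (nhds 0))
    (hg : DifferentiableAt ℝ g θ) :
    (fun p : ℝ × E => w p.1 * (g p.2 - g θ)) =o[stFilter T s θ] stSize s θ := by
  have h : (fun p : ℝ × E => g p.2 - g θ) =O[stFilter T s θ] stSize s θ :=
    (hg.isBigO_sub.comp_tendsto Filter.tendsto_snd).trans isBigO_space
  simpa using ((Asymptotics.isLittleO_one_iff ℝ).2 hw).mul_isBigO h

/-! ### Space-time expansion of a function-valued strongly controlled path -/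

/-- First-order space-time expansion of any strongly controlled path with values in `C²_b`.
Its coefficients are the components of the path and their spatial derivatives; no equation is
involved. -/
lemma SCtrlF.expansion {d : ℕ} {γ κ : ℝ} {x : ℝ → Fin d → ℝ}
    {xx : ℝ → ℝ → Fin d → Fin d → ℝ} (hH : HypH T γ x xx) (hκ : 1 / 3 < κ)
    {z : ℝ → E → ℝ} {zx : ℝ → Fin d → E → ℝ} {zxx : ℝ → Fin d → Fin d → E → ℝ}
    {zt : ℝ → E → ℝ} (hz : SCtrlF 0 T κ 2 x xx z zx zxx zt) (hs : s ∈ Icc (0 : ℝ) T) :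
    (fun p : ℝ × E => z p.1 p.2 - z s θ - (p.1 - s) * zt s θ
        - (∑ l, (x p.1 l - x s l) * zx s l θ)
        - (∑ l, ∑ k, xx s p.1 k l * zxx s l k θ)
        - fderiv ℝ (z s) θ (p.2 - θ)
        - ∑ l, (x p.1 l - x s l) * fderiv ℝ (zx s l) θ (p.2 - θ))
      =o[stFilter T s θ] stSize s θ := by
  obtain ⟨hγ, ⟨Cx, hCx⟩, ⟨Cxx, hCxx⟩, -, -⟩ := hH
  obtain ⟨⟨Cz, hCz⟩, -, ⟨Czx, hCzx⟩, -, ⟨Czxx, hCzxx⟩, -, ⟨Czt, hCzt⟩, hunif,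
    ⟨Cf, hCf⟩, -⟩ := hz
  have hx : ∀ l, Filter.Tendsto (fun p : ℝ × E => x p.1 l - x s l) (stFilter T s θ) (nhds 0) :=
    fun l => tendsto_of_holder (f := fun t => x t l - x s l) (by linarith : 0 < γ)
      fun t ht => (norm_le_pi_norm (d1 x s t) l).trans (hCx s hs t ht)
  have hxx : ∀ k l, Filter.Tendsto (fun p : ℝ × E => xx s p.1 k l) (stFilter T s θ) (nhds 0) :=
    fun k l => tendsto_of_holder (f := fun t => xx s t k l) (by linarith : 0 < 2 * γ)
      fun t ht => ((norm_le_pi_norm (xx s t k) l).trans (norm_le_pi_norm (xx s t) k)).trans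
        (hCxx s hs t ht)
  have hflat := isLittleO_of_holder (T := T) (s := s) (θ := θ) (C := Cf) (μ := 3 * κ)
    (f := fun p => z p.1 p.2 - z s p.2 - (∑ l, (x p.1 l - x s l) * zx s l p.2)
        - (∑ l, ∑ k, xx s p.1 k l * zxx s l k p.2) - ∫ r in s..p.1, zt r p.2)
    (by linarith) fun p hp => (hCf s hs p.1 hp).norm_le p.2
  have hdrift := isLittleO_drift (θ := θ) (zt := zt) hs
    ((hCzt s hs).differentiableAt θ).continuousAt fun t₀ ht₀ ε hε => by
      obtain ⟨δ, hδ, h⟩ := hunif t₀ ht₀ ε hε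
      exact ⟨δ, hδ, fun t ht htt ν => (h t ht htt).norm_le ν⟩
  have hfirst := Asymptotics.IsLittleO.sum (s := Finset.univ) fun l (_ : l ∈ Finset.univ) =>
    isLittleO_increment_mul_spatial (w := fun t => x t l - x s l) (hx l)
      ((hCzx l s hs).differentiableAt θ)
  have hsecond := Asymptotics.IsLittleO.sum (s := Finset.univ) fun l (_ : l ∈ Finset.univ) =>
    Asymptotics.IsLittleO.sum (s := Finset.univ) fun k (_ : k ∈ Finset.univ) =>
      isLittleO_increment_mul_diff (w := fun t => xx s t k l) (hxx k l)
        ((hCzxx l k s hs).differentiableAt θ)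
  have hspace := isLittleO_spatial (T := T) (s := s) ((hCz s hs).differentiableAt θ)
  refine ((((hflat.add hdrift).add hfirst).add hsecond).add hspace).congr_left fun p => ?_
  simp only [Finset.sum_apply, mul_sub, Finset.sum_sub_distrib]
  ring

end Taylor

/-! ### Chain rule -/

lemma fderiv_apply_eq_sum {n : ℕ} (f : (Fin n → ℝ) → ℝ) (θ v : Fin n → ℝ) :
    fderiv ℝ f θ v = ∑ j, pderiv' j f θ * v j := by
  conv_lhs => rw [pi_eq_sum_univ' v]
  simp only [map_sum, map_smul, smul_eq_mul, pderiv']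
  refine Finset.sum_congr rfl fun j _ => ?_
  rw [mul_comm]

lemma differentiableAt_Dgrad {n : ℕ} {u : ℝ → (Fin n → ℝ) → ℝ} {s : ℝ}
    (hu : ContDiff ℝ 2 (u s)) (i : Fin n) (θ : Fin n → ℝ) :
    DifferentiableAt ℝ (fun v => pderiv' i (u s) v) θ := by
  have h : ContDiff ℝ 1 (fderiv ℝ (u s)) := hu.fderiv_right (by norm_num)
  exact ((h.differentiable (by norm_num)).differentiableAt).clm_apply (by fun_prop)

/-- Chain rule for `v ↦ σ(u_s(v), Du_s(v))`. -/
lemma pderiv_comp {n : ℕ} {σ : ℝ → (Fin n → ℝ) → ℝ} {u : ℝ → (Fin n → ℝ) → ℝ} {s : ℝ}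
    (hσ : ContDiff ℝ 3 (fun q : ℝ × (Fin n → ℝ) => σ q.1 q.2)) (hu : ContDiff ℝ 2 (u s))
    (j : Fin n) (θ : Fin n → ℝ) :
    pderiv' j (fun v => σ (u s v) (Dgrad u s v)) θ
      = dσu σ (u s θ) (Dgrad u s θ) * pderiv' j (u s) θ
        + ∑ i, dσp σ i (u s θ) (Dgrad u s θ) * pderiv' j (fun v => pderiv' i (u s) v) θ := by
  set S : ℝ × (Fin n → ℝ) → ℝ := fun q => σ q.1 q.2 with hS
  set q₀ : ℝ × (Fin n → ℝ) := (u s θ, Dgrad u s θ) with hq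
  have hSd : HasFDerivAt S (fderiv ℝ S q₀) q₀ :=
    ((hσ.differentiable (by norm_num)).differentiableAt).hasFDerivAt
  have hu1 : HasFDerivAt (u s) (fderiv ℝ (u s) θ) θ :=
    ((hu.differentiable (by norm_num)).differentiableAt).hasFDerivAt
  have hD : HasFDerivAt (fun v => Dgrad u s v)
      (ContinuousLinearMap.pi fun i => fderiv ℝ (fun v => pderiv' i (u s) v) θ) θ :=
    hasFDerivAt_pi.2 fun i => (differentiableAt_Dgrad hu i θ).hasFDerivAt
  have hcomp : HasFDerivAt (fun v => σ (u s v) (Dgrad u s v)) _ θ :=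
    HasFDerivAt.comp (g := S) θ hSd (hu1.prodMk hD)
  have hdu : dσu σ (u s θ) (Dgrad u s θ) = fderiv ℝ S q₀ (1, 0) := by
    have h1 : HasDerivAt (fun w : ℝ => (w, Dgrad u s θ)) ((1 : ℝ), (0 : Fin n → ℝ)) (u s θ) :=
      (hasDerivAt_id _).prodMk (hasDerivAt_const _ _)
    exact (hSd.comp_hasDerivAt (u s θ) h1).deriv
  have hdp : ∀ p : Fin n → ℝ, fderiv ℝ (σ (u s θ)) (Dgrad u s θ) p = fderiv ℝ S q₀ (0, p) := by
    intro p
    have h1 : HasFDerivAt (fun w : Fin n → ℝ => (u s θ, w))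
        ((0 : (Fin n → ℝ) →L[ℝ] ℝ).prod (.id ℝ _)) (Dgrad u s θ) :=
      (hasFDerivAt_const _ _).prodMk (hasFDerivAt_id _)
    have h2 : HasFDerivAt (σ (u s θ)) _ (Dgrad u s θ) :=
      HasFDerivAt.comp (g := S) (Dgrad u s θ) hSd h1
    rw [h2.fderiv]
    simp
  have hsum := fderiv_apply_eq_sum (σ (u s θ)) (Dgrad u s θ)
    (fun i => pderiv' j (fun v => pderiv' i (u s) v) θ)
  rw [hdp] at hsum
  change _ = _ + ∑ i, pderiv' i (σ (u s θ)) (Dgrad u s θ) * _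
  rw [← hsum, hdu, pderiv', hcomp.fderiv]
  change fderiv ℝ S q₀ (pderiv' j (u s) θ, fun i => pderiv' j (fun v => pderiv' i (u s) v) θ) = _
  have hsplit : (pderiv' j (u s) θ, fun i => pderiv' j (fun v => pderiv' i (u s) v) θ)
      = pderiv' j (u s) θ • ((1 : ℝ), (0 : Fin n → ℝ))
        + (0, fun i => pderiv' j (fun v => pderiv' i (u s) v) θ) := by simp
  rw [hsplit, map_add, map_smul, smul_eq_mul, mul_comm]

/-! ### Expansion of strong solutions -/

/-- Space-time Taylor expansion of a strong solution `u` of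
`du = F(u,Du)dt + σ^l(u,Du)dx^l`:
`u_t(ν) = u_s(θ) + a_s(θ)(t-s) + b^l_s(θ) δx^l_{st} + c^{lk}_s(θ) x²^{kl}_{st}
+ p^j_s(θ)(ν^j-θ^j) + q^{jl}_s(θ) δx^l_{st}(ν^j-θ^j) + o(|t-s| + |ν-θ|)`. -/
theorem stmt11 {d n : ℕ} (T γ κ : ℝ)
    (x : ℝ → Fin d → ℝ) (xx : ℝ → ℝ → Fin d → Fin d → ℝ)
    (hH : HypH T γ x xx) (hT : 0 ≤ T) (hκ : 1/3 < κ) (hκγ : κ ≤ γ)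
    (F : ℝ → (Fin n → ℝ) → ℝ) (σ : Fin d → ℝ → (Fin n → ℝ) → ℝ)
    (hF : ContDiff ℝ 3 (fun q : ℝ × (Fin n → ℝ) => F q.1 q.2))
    (hσ : ∀ l, ContDiff ℝ 3 (fun q : ℝ × (Fin n → ℝ) => σ l q.1 q.2))
    (u : ℝ → (Fin n → ℝ) → ℝ)
    -- `u` is a strong solution, i.e. a strongly controlled path with values in
    -- `C²(ℝ^n)` whose components are given by `σ` and `F`:
    (hu : SCtrlF 0 T κ 2 x xx u
      (fun t l θ => σ l (u t θ) (Dgrad u t θ))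
      (fun t l₁ l₂ θ =>
        dσu (σ l₁) (u t θ) (Dgrad u t θ) * σ l₂ (u t θ) (Dgrad u t θ)
        + ∑ j, dσp (σ l₁) j (u t θ) (Dgrad u t θ) *
            (dσu (σ l₂) (u t θ) (Dgrad u t θ) * pderiv' j (u t) θ
              + ∑ i, dσp (σ l₂) i (u t θ) (Dgrad u t θ)
                  * pderiv' j (fun v => pderiv' i (u t) v) θ))
      (fun t θ => F (u t θ) (Dgrad u t θ))) :
    ∀ s ∈ Icc (0:ℝ) T, ∀ θ : Fin n → ℝ, ∀ ε > (0:ℝ), ∃ δ > (0:ℝ),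
      ∀ t ∈ Icc (0:ℝ) T, ∀ ν : Fin n → ℝ, |t - s| < δ → ‖ν - θ‖ < δ →
        |u t ν - u s θ - (t - s) * F (u s θ) (Dgrad u s θ)
            - (∑ l, (x t l - x s l) * σ l (u s θ) (Dgrad u s θ))
            - (∑ l, ∑ k, xx s t k l *
                (σ k (u s θ) (Dgrad u s θ) * dσu (σ l) (u s θ) (Dgrad u s θ)
                  + ∑ j, pderiv' j (fun v => σ k (u s v) (Dgrad u s v)) θ
                      * dσp (σ l) j (u s θ) (Dgrad u s θ)))
            - (∑ j, pderiv' j (u s) θ * (ν j - θ j))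
            - ∑ j, ∑ l, (x t l - x s l)
                * pderiv' j (fun v => σ l (u s v) (Dgrad u s v)) θ * (ν j - θ j)|
          ≤ ε * (|t - s| + ‖ν - θ‖) := by
  intro s hs θ ε hε
  have hu2 : ContDiff ℝ 2 (u s) := by
    obtain ⟨C, hC⟩ := hu.1
    exact (hC s hs).1
  have hexp := (hu.expansion (θ := θ) hH hκ hs).def hε
  rw [((nhdsWithin_hasBasis Metric.nhds_basis_ball (Icc (0 : ℝ) T)).prod
    Metric.nhds_basis_ball).eventually_iff] at hexp
  obtain ⟨⟨δ₁, δ₂⟩, ⟨hδ₁, hδ₂⟩, h⟩ := hexp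
  refine ⟨min δ₁ δ₂, lt_min hδ₁ hδ₂, fun t ht ν hts hνθ => ?_⟩
  have hmem : (t, ν) ∈ (Metric.ball s δ₁ ∩ Icc (0 : ℝ) T) ×ˢ Metric.ball θ δ₂ :=
    ⟨⟨hts.trans_le (min_le_left _ _), ht⟩,
      mem_ball_iff_norm.2 (hνθ.trans_le (min_le_right _ _))⟩
  have key := h hmem
  have hsize : 0 ≤ stSize s θ (t, ν) := add_nonneg (abs_nonneg _) (norm_nonneg _)
  rw [Real.norm_eq_abs, Real.norm_eq_abs,
    abs_of_nonneg hsize] at key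
  refine le_of_eq_of_le (congrArg abs ?_) key
  simp only [fderiv_apply_eq_sum, Pi.sub_apply]
  -- Two summands differ in form: the second-order coefficient, matched by the chain rule, and
  -- the mixed term, matched by exchanging the sums over `j` and `l`.
  congr 1
  · congr 2
    refine Finset.sum_congr rfl fun l _ => Finset.sum_congr rfl fun k _ => ?_
    simp only [← pderiv_comp (hσ k) hu2]
    congr 2
    · ring
    · exact Finset.sum_congr rfl fun j _ => mul_comm _ _
  · rw [Finset.sum_comm]
    refine Finset.sum_congr rfl fun l _ => ?_
    rw [Finset.mul_sum]
    exact Finset.sum_congr rfl fun j _ => by ring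
end
end
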